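/- arXiv:2202.11443 — 3 statements merged into one kernel-verified Lean document; each statement's English description precedes it below -/
import Mathlib

section
/- In the progress-sequence setup, Σ_{t ∈ T_q} √(b_{t−1}/n) ≤ τ_q·(√(τ_c) + τ_q − 1)/n. (First part of Lemma 2 of the paper: the total amount by which quantum queries can 'charge' the potential b is bounded.) -/
/-!
Rescale by `s t = √(n * b t)`. A quantum step turns `s²` into `(s + 2)²`, so it adds exactly `2`
to `s`, while a classical step adds at most `1` to `s²`. Hence after `c` classical and `q` quantum
steps `s ≤ √c + 2 * q`, in whatever order the steps were made. Since `√(b / n) = s / n`, the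
`j`-th quantum step (counting from `0`) charges at most `(√τc + 2 * j) / n`, and summing the
arithmetic progression over `j < τq` gives the bound. The lemma `charge_invariant` carries both
bounds through one induction on the number of steps.
-/

/-- A quantum step charges at most `S / n` and moves a bound `S` on `√(n * b)` to `S + 2`. -/
lemma quantum_step {n x S : ℝ} (hn : 0 < n) (hS : 0 ≤ S) (h : n * x ≤ S ^ 2) :
    √(x / n) ≤ S / n ∧ n * (x + 4 / n + 4 * √(x / n)) ≤ (S + 2) ^ 2 := by
  have h1 : √(x / n) ≤ S / n := by
    apply Real.sqrt_le_iff.mpr ⟨by positivity, ?_⟩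
    rw [div_pow, div_le_div_iff₀ hn (by positivity)]
    nlinarith
  refine ⟨h1, ?_⟩
  have h2 : n * √(x / n) ≤ S := by
    rw [le_div_iff₀ hn] at h1
    linarith
  have h3 : n * (x + 4 / n + 4 * √(x / n)) = n * x + 4 + 4 * (n * √(x / n)) := by
    field_simp
  nlinarith

/-- A classical step moves the bound `√c + 2 * q` on `√(n * b)` to `√(c + 1) + 2 * q`. -/
lemma classical_step {n x y c q : ℝ} (hn : 0 < n) (hc : 0 ≤ c) (hq : 0 ≤ q) (hy : 0 ≤ y)
    (h : n * x ≤ (√c + 2 * q) ^ 2) :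
    n * (x + 1 / n - y) ≤ (√(c + 1) + 2 * q) ^ 2 := by
  have h1 : √c ≤ √(c + 1) := Real.sqrt_le_sqrt (by linarith)
  have h2 := Real.sq_sqrt hc
  have h3 := Real.sq_sqrt (show 0 ≤ c + 1 by linarith)
  have h4 : n * (x + 1 / n - y) = n * x + 1 - n * y := by field_simp
  nlinarith [mul_nonneg hn.le hy, mul_le_mul_of_nonneg_left h1 hq]

/-- The bounds on the potential and on the total charge after `m` steps, in terms of the numbers
of classical and quantum steps among them. -/
lemma charge_invariant (n : ℝ) (hn : 0 < n) (τ : ℕ) (Tc : Finset ℕ) (w b : ℕ → ℝ)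
    (hb0 : b 0 = 0)
    (hrec : ∀ t : ℕ, 1 ≤ t → t ≤ τ →
      b t = if t ∈ Tc then b (t - 1) + 1 / n - w t
            else b (t - 1) + 4 / n + 4 * √(b (t - 1) / n))
    (hw : ∀ t ∈ Tc, 0 ≤ w t) (m : ℕ) (hm : m ≤ τ) :
    n * b m ≤ (√(((Finset.Icc 1 m ∩ Tc).card : ℕ) : ℝ)
        + 2 * (((Finset.Icc 1 m \ Tc).card : ℕ) : ℝ)) ^ 2 ∧
    ∑ t ∈ Finset.Icc 1 m \ Tc, √(b (t - 1) / n) ≤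
      (((Finset.Icc 1 m \ Tc).card : ℕ) : ℝ) * (√(((Finset.Icc 1 m ∩ Tc).card : ℕ) : ℝ)
        + (((Finset.Icc 1 m \ Tc).card : ℕ) : ℝ) - 1) / n := by
  induction m with
  | zero => simp [hb0]
  | succ m ih =>
    obtain ⟨ih1, ih2⟩ := ih (by omega)
    have hr := hrec (m + 1) (by omega) hm
    rw [Nat.add_sub_cancel] at hr
    have hI : Finset.Icc 1 (m + 1) = insert (m + 1) (Finset.Icc 1 m) :=
      (Finset.insert_Icc_right_eq_Icc_add_one (by omega)).symm
    by_cases ht : m + 1 ∈ Tc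
    · rw [if_pos ht] at hr
      rw [hI, Finset.insert_sdiff_of_mem _ ht, Finset.insert_inter_of_mem ht,
        Finset.card_insert_of_notMem (by simp), hr]
      push_cast
      refine ⟨classical_step hn (by positivity) (by positivity) (hw _ ht) ih1, ih2.trans ?_⟩
      gcongr
      linarith
    · rw [if_neg ht] at hr
      rw [hI, Finset.insert_sdiff_of_notMem _ ht, Finset.insert_inter_of_notMem ht,
        Finset.card_insert_of_notMem (by simp), Finset.sum_insert (by simp), hr]
      push_cast
      obtain ⟨h1, h2⟩ := quantum_step hn (by positivity) ih1
      refine ⟨h2.trans_eq (by ring), (add_le_add h1 ih2).trans_eq (by ring)⟩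


/-- first part of Lemma 2 of the paper: the total amount by which quantum
queries can "charge" the potential `b` is bounded:
`Σ_{t ∈ T_q} √(b_{t-1}/n) ≤ τ_q(√τ_c + τ_q - 1)/n`. -/
theorem stmt_16 (n : ℝ) (hn : 0 < n) (τc τq : ℕ)
    (Tc : Finset ℕ) (hTcsub : Tc ⊆ Finset.Icc 1 (τc + τq)) (hTccard : Tc.card = τc)
    (w b : ℕ → ℝ)
    (hb0 : b 0 = 0)
    (hrec : ∀ t : ℕ, 1 ≤ t → t ≤ τc + τq →
      b t = if t ∈ Tc then b (t - 1) + 1 / n - w t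
            else b (t - 1) + 4 / n + 4 * Real.sqrt (b (t - 1) / n))
    (hw : ∀ t ∈ Tc, 0 ≤ w t ∧ w t ≤ b (t - 1)) :
    ∑ t ∈ Finset.Icc 1 (τc + τq) \ Tc, Real.sqrt (b (t - 1) / n)
      ≤ (τq : ℝ) * (Real.sqrt τc + τq - 1) / n := by
  have hc : (Finset.Icc 1 (τc + τq) ∩ Tc).card = τc := by
    rw [Finset.inter_eq_right.mpr hTcsub, hTccard]
  have hq : (Finset.Icc 1 (τc + τq) \ Tc).card = τq := by
    rw [Finset.card_sdiff_of_subset hTcsub, hTccard, Nat.card_Icc]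
    omega
  have h := (charge_invariant n hn (τc + τq) Tc w b hb0 hrec (fun t ht => (hw t ht).1) _ le_rfl).2
  rwa [hc, hq] at h
end

section
/- In the progress-sequence setup, Σ_{t ∈ T_c} √(w_t/n) ≤ (τ_c + 2·√(τ_c)·τ_q)/n. (The unnamed Claim of Section 5.4: the total reduction of the progress measure A attributable to pseudo-classical queries is bounded, since Σ_{t ∈ T_c} w_t ≤ (√τ_c + 2τ_q)²/n.) -/
/-!
Let `B t = b t + ∑_{i ≤ t, i ∈ Tc} w i` be the progress with all reductions undone, and let `c`, `q`
count the two kinds of steps up to time `t`. Then `n * B t ≤ (√c + 2 q)²` by induction: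
a step in `Tc` adds exactly `1` to the left side, and `(√c + 2q)² + 1 ≤ (√(c+1) + 2q)²`; any other
step adds `4 + 4 √(n b) ≤ 4 + 4 (√c + 2q)`, which completes the square `(√c + 2q + 2)²`.
As `b ≥ 0`, the final time gives `∑ w ≤ (√τc + 2 τq)² / n`, and Cauchy–Schwarz over the `τc`
elements of `Tc` finishes.
-/

/-- The potential bound `n * B t ≤ (√c + 2 q)²`, with the counts `c`, `q` written as sums of
indicators over `{1, …, t}`; nonnegativity of `b`, `c` and `q` is carried along. -/
lemma potential_bound (n : ℝ) (hn : 0 < n) (N : ℕ) (Tc : Finset ℕ) (w b : ℕ → ℝ)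
    (hb0 : b 0 = 0)
    (hrec : ∀ t : ℕ, 1 ≤ t → t ≤ N →
      b t = if t ∈ Tc then b (t - 1) + 1 / n - w t
            else b (t - 1) + 4 / n + 4 * Real.sqrt (b (t - 1) / n))
    (hw : ∀ t ∈ Tc, 0 ≤ w t ∧ w t ≤ b (t - 1)) (t : ℕ) (ht : t ≤ N) :
    0 ≤ b t ∧ 0 ≤ (∑ i ∈ Finset.Icc 1 t, if i ∈ Tc then w i else 0) ∧
    0 ≤ (∑ i ∈ Finset.Icc 1 t, if i ∈ Tc then (1 : ℝ) else 0) ∧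
    0 ≤ (∑ i ∈ Finset.Icc 1 t, if i ∈ Tc then (0 : ℝ) else 1) ∧
    n * (b t + ∑ i ∈ Finset.Icc 1 t, if i ∈ Tc then w i else 0) ≤
      (Real.sqrt (∑ i ∈ Finset.Icc 1 t, if i ∈ Tc then (1 : ℝ) else 0) +
        2 * ∑ i ∈ Finset.Icc 1 t, if i ∈ Tc then (0 : ℝ) else 1) ^ 2 := by
  induction t with
  | zero => simp [hb0]
  | succ t ih =>
    have h := hrec (t + 1) (by omega) ht
    obtain ⟨hb, hS, hC, hQ, hB⟩ := ih (by omega)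
    rw [Nat.add_sub_cancel] at h
    simp only [Finset.sum_Icc_succ_top (show 1 ≤ t + 1 by omega)]
    generalize (∑ i ∈ Finset.Icc 1 t, if i ∈ Tc then w i else 0) = S at *
    generalize (∑ i ∈ Finset.Icc 1 t, if i ∈ Tc then (1 : ℝ) else 0) = C at *
    generalize (∑ i ∈ Finset.Icc 1 t, if i ∈ Tc then (0 : ℝ) else 1) = Q at *
    by_cases hm : t + 1 ∈ Tc
    · simp only [hm, if_true] at h ⊢
      obtain ⟨hw0, hw1⟩ := hw _ hm
      rw [Nat.add_sub_cancel] at hw1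
      have hn' : 0 < 1 / n := by positivity
      refine ⟨by linarith, by linarith, by linarith, by linarith, ?_⟩
      have e : n * (b (t + 1) + (S + w (t + 1))) = n * (b t + S) + 1 := by
        rw [h]; field_simp; ring
      rw [e, add_zero]
      have h1 := Real.sq_sqrt hC
      have h2 := Real.sq_sqrt (show 0 ≤ C + 1 by linarith)
      have h3 : Real.sqrt C ≤ Real.sqrt (C + 1) := Real.sqrt_le_sqrt (by linarith)
      nlinarith [mul_le_mul_of_nonneg_right h3 hQ]
    · simp only [hm, if_false] at h ⊢
      have hD : 0 ≤ Real.sqrt C + 2 * Q := by positivity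
      have hs : Real.sqrt (b t / n) ≤ (Real.sqrt C + 2 * Q) / n := by
        apply Real.sqrt_le_iff.2 ⟨by positivity, ?_⟩
        rw [div_pow, div_le_div_iff₀ hn (by positivity)]
        have h1 : n * b t ≤ (Real.sqrt C + 2 * Q) ^ 2 :=
          le_trans (mul_le_mul_of_nonneg_left (by linarith) hn.le) hB
        nlinarith
      rw [le_div_iff₀ hn] at hs
      refine ⟨by rw [h]; positivity, by linarith, by linarith, by linarith, ?_⟩
      have e : n * (b (t + 1) + (S + 0)) =
          n * (b t + S) + 4 + 4 * (Real.sqrt (b t / n) * n) := by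
        rw [h]; field_simp; ring
      rw [e, add_zero]
      nlinarith

/-- the unnamed Claim of Section 5.4: the total reduction of the progress
measure `A` attributable to pseudo-classical queries is bounded:
`Σ_{t ∈ T_c} √(w_t/n) ≤ (τ_c + 2√τ_c·τ_q)/n`. -/
theorem stmt_18 (n : ℝ) (hn : 0 < n) (τc τq : ℕ)
    (Tc : Finset ℕ) (hTcsub : Tc ⊆ Finset.Icc 1 (τc + τq)) (hTccard : Tc.card = τc)
    (w b : ℕ → ℝ)
    (hb0 : b 0 = 0)
    (hrec : ∀ t : ℕ, 1 ≤ t → t ≤ τc + τq →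
      b t = if t ∈ Tc then b (t - 1) + 1 / n - w t
            else b (t - 1) + 4 / n + 4 * Real.sqrt (b (t - 1) / n))
    (hw : ∀ t ∈ Tc, 0 ≤ w t ∧ w t ≤ b (t - 1)) :
    ∑ t ∈ Tc, Real.sqrt (w t / n) ≤ ((τc : ℝ) + 2 * Real.sqrt τc * τq) / n := by
  obtain ⟨hb, -, -, -, hB⟩ := potential_bound n hn (τc + τq) Tc w b hb0 hrec hw _ le_rfl
  have hC : (∑ i ∈ Finset.Icc 1 (τc + τq), if i ∈ Tc then (1 : ℝ) else 0) = τc := by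
    rw [Finset.sum_ite_mem, Finset.inter_eq_right.2 hTcsub]; simp [hTccard]
  have hS : (∑ i ∈ Finset.Icc 1 (τc + τq), if i ∈ Tc then w i else 0) = ∑ i ∈ Tc, w i := by
    rw [Finset.sum_ite_mem, Finset.inter_eq_right.2 hTcsub]
  have hQ : (∑ i ∈ Finset.Icc 1 (τc + τq), if i ∈ Tc then (0 : ℝ) else 1) = τq := by
    have h1 : (∑ i ∈ Finset.Icc 1 (τc + τq), if i ∈ Tc then (1 : ℝ) else 0) +
        (∑ i ∈ Finset.Icc 1 (τc + τq), if i ∈ Tc then (0 : ℝ) else 1) = τc + τq := by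
      rw [← Finset.sum_add_distrib,
        Finset.sum_congr rfl (g := fun _ => (1 : ℝ)) (fun i _ => by split_ifs <;> simp)]
      simp
    linarith
  rw [hC, hS, hQ] at hB
  have hcs := sq_sum_le_card_mul_sum_sq (s := Tc) (f := fun t => Real.sqrt (w t / n))
  have hsq : ∑ t ∈ Tc, Real.sqrt (w t / n) ^ 2 = (∑ t ∈ Tc, w t) / n := by
    rw [Finset.sum_div]
    exact Finset.sum_congr rfl fun t ht => Real.sq_sqrt (div_nonneg (hw t ht).1 hn.le)
  rw [hsq, hTccard] at hcs
  refine le_of_abs_le (abs_le_of_sq_le_sq ?_ (by positivity))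
  refine hcs.trans ?_
  have h1 := Real.sq_sqrt (Nat.cast_nonneg (α := ℝ) τc)
  have e : (((τc : ℝ) + 2 * Real.sqrt τc * τq) / n) ^ 2 =
      τc * (((Real.sqrt τc + 2 * τq) ^ 2 / n) / n) := by
    have : (τc : ℝ) + 2 * Real.sqrt τc * τq = Real.sqrt τc * (Real.sqrt τc + 2 * τq) := by
      linear_combination -h1
    rw [this, div_pow, mul_pow, h1]; field_simp
  rw [e]
  have h2 : ∑ t ∈ Tc, w t ≤ (Real.sqrt τc + 2 * τq) ^ 2 / n := by
    rw [le_div_iff₀ hn]; nlinarith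
  gcongr
end

section
/- In the progress-sequence setup, additionally define a : {0,1,…,τ} → ℝ by a_0 = 1 and, for t ≥ 1: a_t = a_{t−1} − 2/n − 2·√(w_t/n) if t ∈ T_c, and a_t = a_{t−1} − 4/n − 4·√(b_{t−1}/n) if t ∈ T_q. Then a_τ ≥ 1 − 4·(√(τ_c) + τ_q)²/n. (Final bound of Section 5.4 on the companion progress sequence a, which lower-bounds the progress measure A at the end of the algorithm.) -/
/-!
Rescale by `n`, so that `B = n b` and `D = n (1 - a)`. After `c` steps in `Tc` and `q` other steps let
`S` be the sum of the increments `4 + 4 √B` over the other steps, and let `W`, `V` be the sums of `n w`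
and of `√(n w)` over the steps in `Tc`. Then `B = c + S - W` and `D = 2 c + 2 V + S`.

* Dropping `W` gives `B ≤ c + S`, and inductively `c + S ≤ (√c + 2 q)²`: a step in `Tc` only enlarges
  the bound `4 q² + 4 q √c` on `S`, and at any other step `√B ≤ √c + 2 q` bounds the increment by
  `4 + 4 √c + 8 q`.
* By Cauchy-Schwarz `V² ≤ c W`, and `0 ≤ B` gives `W ≤ c + S ≤ (√c + 2 q)²`, so
  `V ≤ √c (√c + 2 q)`.

Hence `D ≤ 2 c + 2 √c (√c + 2 q) + 4 q² + 4 q √c = 4 (√c + q)²`.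
-/

lemma mul_sqrt_div_eq (n x : ℝ) (hn : 0 < n) : n * Real.sqrt (x / n) = Real.sqrt (n * x) := by
  have h : n * x = n ^ 2 * (x / n) := by field_simp
  rw [h, Real.sqrt_mul (sq_nonneg n), Real.sqrt_sq hn.le]

/-- Inductive step of the Cauchy-Schwarz inequality `(∑ √wᵢ)² ≤ c ∑ wᵢ`. -/
lemma cauchy_schwarz_step (c V W x : ℝ) (hc : 0 ≤ c) (hW : 0 ≤ W) (hVW : V ^ 2 ≤ c * W) :
    (V + x) ^ 2 ≤ (c + 1) * (W + x ^ 2) := by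
  have h : 2 * V * x ≤ W + c * x ^ 2 := by
    refine le_of_abs_le (abs_le_of_sq_le_sq ?_ (by positivity))
    have h1 : V ^ 2 * x ^ 2 ≤ c * W * x ^ 2 := by gcongr
    nlinarith [sq_nonneg (W - c * x ^ 2)]
  nlinarith

/-- The rescaled quantities `S`, `W`, `V` after `t` steps, `c = #(Tc ∩ [1, t])` of them in `Tc` and
`q` of them not, with the identities and bounds they satisfy. -/
lemma progress_invariant (n : ℝ) (hn : 0 < n) (N : ℕ) (Tc : Finset ℕ) (w b a : ℕ → ℝ)
    (hb0 : b 0 = 0)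
    (hbrec : ∀ t : ℕ, 1 ≤ t → t ≤ N →
      b t = if t ∈ Tc then b (t - 1) + 1 / n - w t
            else b (t - 1) + 4 / n + 4 * Real.sqrt (b (t - 1) / n))
    (hw : ∀ t ∈ Tc, 0 ≤ w t ∧ w t ≤ b (t - 1))
    (ha0 : a 0 = 1)
    (harec : ∀ t : ℕ, 1 ≤ t → t ≤ N →
      a t = if t ∈ Tc then a (t - 1) - 2 / n - 2 * Real.sqrt (w t / n)
            else a (t - 1) - 4 / n - 4 * Real.sqrt (b (t - 1) / n))
    (t : ℕ) (ht : t ≤ N) :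
    ∃ (c q : ℕ) (S W V : ℝ), c = (Tc ∩ Finset.Icc 1 t).card ∧ c + q = t ∧ 0 ≤ W ∧
      V ^ 2 ≤ c * W ∧ S ≤ 4 * (q : ℝ) ^ 2 + 4 * q * Real.sqrt c ∧
      n * b t = c + S - W ∧ n * (1 - a t) = 2 * c + 2 * V + S ∧ 0 ≤ b t := by
  induction t with
  | zero => exact ⟨0, 0, 0, 0, 0, by simp [hb0, ha0]⟩
  | succ t ih =>
    obtain ⟨c, q, S, W, V, hc, hcq, hW, hVW, hS, hB, hD, hb⟩ := ih (by omega)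
    have hbt := hbrec (t + 1) (by omega) ht
    have hat := harec (t + 1) (by omega) ht
    have hIcc : Finset.Icc 1 (t + 1) = insert (t + 1) (Finset.Icc 1 t) := by
      ext x; simp only [Finset.mem_Icc, Finset.mem_insert]; omega
    rw [Nat.add_sub_cancel] at hbt hat
    by_cases hmem : t + 1 ∈ Tc
    · rw [if_pos hmem] at hbt hat
      obtain ⟨hw0, hwb⟩ := hw (t + 1) hmem
      rw [Nat.add_sub_cancel] at hwb
      have hx := Real.sq_sqrt (mul_nonneg hn.le hw0)
      have hxn := mul_sqrt_div_eq n (w (t + 1)) hn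
      have hmono : Real.sqrt c ≤ Real.sqrt (c + 1) := Real.sqrt_le_sqrt (by linarith)
      have hn1 : n * (1 / n) = 1 := by field_simp
      have hn2 : n * (2 / n) = 2 := by field_simp
      refine ⟨c + 1, q, S, W + n * w (t + 1), V + Real.sqrt (n * w (t + 1)),
        ?_, by omega, by positivity, ?_, ?_, ?_, ?_, ?_⟩
      · rw [hIcc, Finset.inter_insert_of_mem hmem, Finset.card_insert_of_notMem (by simp), ← hc]
      · have := cauchy_schwarz_step c V W (Real.sqrt (n * w (t + 1))) (by positivity) hW hVW
        rw [hx] at this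
        push_cast
        exact this
      · push_cast
        refine hS.trans ?_
        gcongr
      · rw [hbt]; push_cast; linear_combination hB + hn1
      · rw [hat]; push_cast; linear_combination hD + hn2 + 2 * hxn
      · rw [hbt]
        have : 0 < 1 / n := by positivity
        linarith
    · rw [if_neg hmem] at hbt hat
      have hxn := mul_sqrt_div_eq n (b t) hn
      have hn4 : n * (4 / n) = 4 := by field_simp
      have hcs : Real.sqrt c ^ 2 = c := Real.sq_sqrt (by positivity)
      have hle : Real.sqrt (n * b t) ≤ Real.sqrt c + 2 * q := by
        apply Real.sqrt_le_iff.2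
        refine ⟨by positivity, ?_⟩
        nlinarith
      refine ⟨c, q + 1, S + 4 + 4 * Real.sqrt (n * b t), W, V,
        ?_, by omega, hW, hVW, ?_, ?_, ?_, ?_⟩
      · rw [hIcc, Finset.inter_insert_of_notMem hmem, ← hc]
      · push_cast
        nlinarith
      · rw [hbt]; linear_combination hB + hn4 + 4 * hxn
      · rw [hat]; linear_combination hD + hn4 + 4 * hxn
      · rw [hbt]; positivity

/-- final bound of Section 5.4: the companion progress sequence `a`
satisfies `a_τ ≥ 1 - 4(√τ_c + τ_q)²/n`. -/
theorem stmt_19 (n : ℝ) (hn : 0 < n) (τc τq : ℕ)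
    (Tc : Finset ℕ) (hTcsub : Tc ⊆ Finset.Icc 1 (τc + τq)) (hTccard : Tc.card = τc)
    (w b a : ℕ → ℝ)
    (hb0 : b 0 = 0)
    (hbrec : ∀ t : ℕ, 1 ≤ t → t ≤ τc + τq →
      b t = if t ∈ Tc then b (t - 1) + 1 / n - w t
            else b (t - 1) + 4 / n + 4 * Real.sqrt (b (t - 1) / n))
    (hw : ∀ t ∈ Tc, 0 ≤ w t ∧ w t ≤ b (t - 1))
    (ha0 : a 0 = 1)
    (harec : ∀ t : ℕ, 1 ≤ t → t ≤ τc + τq →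
      a t = if t ∈ Tc then a (t - 1) - 2 / n - 2 * Real.sqrt (w t / n)
            else a (t - 1) - 4 / n - 4 * Real.sqrt (b (t - 1) / n)) :
    1 - 4 * (Real.sqrt τc + τq) ^ 2 / n ≤ a (τc + τq) := by
  obtain ⟨c, q, S, W, V, hc, hcq, hW, hVW, hS, hB, hD, hb⟩ :=
    progress_invariant n hn (τc + τq) Tc w b a hb0 hbrec hw ha0 harec (τc + τq) le_rfl
  rw [Finset.inter_eq_left.2 hTcsub, hTccard] at hc
  obtain rfl : q = τq := by omega
  subst hc
  have hcs : Real.sqrt c ^ 2 = c := Real.sq_sqrt (by positivity)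
  have hWle : W ≤ (Real.sqrt c + 2 * q) ^ 2 := by
    have := mul_nonneg hn.le hb
    nlinarith
  have hV : V ≤ Real.sqrt c * (Real.sqrt c + 2 * q) := by
    refine le_of_abs_le (abs_le_of_sq_le_sq ?_ (by positivity))
    rw [mul_pow, hcs]
    exact hVW.trans (by gcongr)
  have hmain : n * (1 - a (c + q)) ≤ 4 * (Real.sqrt c + q) ^ 2 := by nlinarith
  have : 1 - a (c + q) ≤ 4 * (Real.sqrt c + q) ^ 2 / n := by
    rw [le_div_iff₀ hn]; linarith
  linarith
end
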